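/- arXiv:1901.10472 — 2 statements merged into one kernel-verified Lean document; each statement's English description precedes it below -/
import Mathlib

section
/- Let 𝒲 be a finite set of affine planes in ℝ³ (the walls), let m₁^ini,…,m₄^ini ∈ ℝ³ be non-coplanar points, and let L_ini ∈ ℝ³. Then the set of pairs (t, R) ∈ ℝ³ × SO(3) for which there exist walls W₁, W₂, W₃, W₄ ∈ 𝒲, not all equal, with f_M(‖ref_{W₁}(L) − m₁‖², ‖ref_{W₂}(L) − m₂‖², ‖ref_{W₃}(L) − m₃‖², ‖ref_{W₄}(L) − m₄‖²) = 0 (where m_i := R m_i^ini + t and L := R L_ini + t) has measure zero with respect to the product of the Lebesgue measure on ℝ³ and the Haar probability measure on SO(3). -/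
open MeasureTheory
open scoped RealInnerProductSpace

noncomputable section

abbrev E3 := EuclideanSpace ℝ (Fin 3)

open scoped Classical in
/-- The reflection (mirror image) of a point across an affine subspace of ℝ³,
as a total function. -/
def reflAff (W : AffineSubspace ℝ E3) (L : E3) : E3 :=
  if h : Nonempty W then
    haveI := h
    EuclideanGeometry.reflection W L
  else L

/-- `W` is an affine plane in ℝ³. -/
def IsPlane (W : AffineSubspace ℝ E3) : Prop :=
  (W : Set E3).Nonempty ∧ Module.finrank ℝ W.direction = 2

/-- The polynomial `f_M` given by the Cayley–Menger-type determinant formed from the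
pairwise squared distances `D i j = ‖m i - m j‖²` between the four microphones. -/
def fM (m : Fin 4 → E3) (u : Fin 4 → ℝ) : ℝ :=
  let d : Fin 4 → Fin 4 → ℝ := fun i j => ‖m i - m j‖ ^ 2
  Matrix.det !![0,   u 0,   u 1,   u 2,   u 3,   1;
                u 0, d 0 0, d 0 1, d 0 2, d 0 3, 1;
                u 1, d 1 0, d 1 1, d 1 2, d 1 3, 1;
                u 2, d 2 0, d 2 1, d 2 2, d 2 3, 1;
                u 3, d 3 0, d 3 1, d 3 2, d 3 3, 1;
                1,   1,     1,     1,     1,     0]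

instance : MeasurableSpace (Matrix (Fin 3) (Fin 3) ℝ) :=
  inferInstanceAs (MeasurableSpace (Fin 3 → Fin 3 → ℝ))

lemma aff_surj (v : Fin 4 → E3) (hv : AffineIndependent ℝ v) (y : E3) (z : ℝ) :
    ∃ ξ : Fin 4 → ℝ, ∑ i, ξ i • v i = y ∧ ∑ i, ξ i = z := by
  let Ψ : (Fin 4 → ℝ) →ₗ[ℝ] (E3 × ℝ) :=
    { toFun := fun ξ => (∑ i, ξ i • v i, ∑ i, ξ i)
      map_add' := by
        intro a b
        simp [add_smul, Finset.sum_add_distrib]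
      map_smul' := by
        intro r a
        simp [Finset.smul_sum, Finset.mul_sum, mul_smul] }
  have hinj : Function.Injective Ψ := by
    rw [injective_iff_map_eq_zero]
    intro a ha
    have h1 : ∑ i, a i • v i = 0 := congrArg Prod.fst ha
    have h2 : ∑ i, a i = 0 := congrArg Prod.snd ha
    funext i
    exact hv.eq_zero_of_sum_eq_zero h2 h1 i (Finset.mem_univ i)
  have hfr : Module.finrank ℝ (Fin 4 → ℝ) = Module.finrank ℝ (E3 × ℝ) := by simp
  have hs := (LinearMap.injective_iff_surjective_of_finrank_eq_finrank hfr).1 hinj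
  obtain ⟨ξ, hξ⟩ := hs (y, z)
  exact ⟨ξ, congrArg Prod.fst hξ, congrArg Prod.snd hξ⟩

lemma aff_inj (v : Fin 4 → E3) (hv : AffineIndependent ℝ v) (y : E3) (z : ℝ)
    (h : ∀ i, -2 * ⟪y, v i⟫ + z = 0) : y = 0 ∧ z = 0 := by
  obtain ⟨ξ, h1, h2⟩ := aff_surj v hv y (-2 * z)
  have h3 : ∑ i, ξ i * (-2 * ⟪y, v i⟫ + z) = 0 :=
    Finset.sum_eq_zero fun i _ => by rw [h i, mul_zero]
  have h4 : ⟪y, y⟫ = ∑ i, ξ i * ⟪y, v i⟫ := by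
    conv_lhs => rw [← h1]
    rw [h1, ← h1, inner_sum]
    simp [inner_smul_right]
  have h5 : ∑ i, ξ i * (-2 * ⟪y, v i⟫ + z) = -2 * ∑ i, ξ i * ⟪y, v i⟫ + (∑ i, ξ i) * z := by
    rw [Finset.mul_sum, Finset.sum_mul, ← Finset.sum_add_distrib]
    exact Finset.sum_congr rfl fun i _ => by ring
  rw [h3, ← h4, h2, real_inner_self_eq_norm_sq] at h5
  have h6 : ‖y‖ ^ 2 = 0 := by nlinarith [sq_nonneg ‖y‖, sq_nonneg z]
  have h7 : z ^ 2 = 0 := by nlinarith [sq_nonneg ‖y‖, sq_nonneg z]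
  exact ⟨by simpa using h6, by simpa using h7⟩

lemma exists_YZ (v : Fin 4 → E3) (hv : AffineIndependent ℝ v) :
    ∃ (Y : (Fin 4 → ℝ) →ₗ[ℝ] E3) (Z : (Fin 4 → ℝ) →ₗ[ℝ] ℝ),
      ∀ a i, -2 * ⟪Y a, v i⟫ + Z a = a i := by
  let Φ : (E3 × ℝ) →ₗ[ℝ] (Fin 4 → ℝ) :=
    { toFun := fun p i => -2 * ⟪p.1, v i⟫ + p.2
      map_add' := by
        intro a b
        funext i
        simp [inner_add_left]
        ring
      map_smul' := by
        intro r a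
        funext i
        simp [inner_smul_left]
        ring }
  have hinj : Function.Injective Φ := by
    rw [injective_iff_map_eq_zero]
    intro a ha
    obtain ⟨h1, h2⟩ := aff_inj v hv a.1 a.2 (fun i => congrFun ha i)
    exact Prod.ext h1 h2
  have hfr : Module.finrank ℝ (E3 × ℝ) = Module.finrank ℝ (Fin 4 → ℝ) := by simp
  let e := LinearEquiv.ofInjectiveOfFinrankEq Φ hinj hfr
  refine ⟨(LinearMap.fst ℝ E3 ℝ).comp e.symm.toLinearMap,
    (LinearMap.snd ℝ E3 ℝ).comp e.symm.toLinearMap, fun a i => ?_⟩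
  have : Φ (e.symm a) = a := e.apply_symm_apply a
  exact congrFun this i

lemma cm_zero (v : Fin 4 → E3) (hv : AffineIndependent ℝ v) (m : Fin 4 → E3)
    (hmv : ∀ i j, ‖m i - m j‖ = ‖v i - v j‖) (x : E3) (w : ℝ) (u : Fin 4 → ℝ)
    (hu : ∀ i, u i = ‖x - v i‖ ^ 2 + w) (hf : fM m u = 0) : w = 0 := by
  unfold fM at hf
  simp only [hmv] at hf
  obtain ⟨ξ, hξ0, hξ⟩ := Matrix.exists_mulVec_eq_zero_iff.2 hf
  have key : ∀ a b : E3, ‖a - b‖ ^ 2 = ‖a‖ ^ 2 - 2 * ⟪a, b⟫ + ‖b‖ ^ 2 := fun a b =>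
    norm_sub_sq_real a b
  have r0 := congrFun hξ 0
  have r1 := congrFun hξ 1
  have r2 := congrFun hξ 2
  have r3 := congrFun hξ 3
  have r4 := congrFun hξ 4
  have r5 := congrFun hξ 5
  simp [Matrix.mulVec, dotProduct, Fin.sum_univ_succ, hu, key, -sub_self] at r0 r1 r2 r3 r4 r5
  obtain ⟨hk, hh⟩ := aff_inj v hv
    (ξ 0 • x + ξ 1 • v 0 + ξ 2 • v 1 + ξ 3 • v 2 + ξ 4 • v 3)
    (ξ 0 * ‖x‖ ^ 2 + w * ξ 0 + ξ 1 * ‖v 0‖ ^ 2 + ξ 2 * ‖v 1‖ ^ 2 + ξ 3 * ‖v 2‖ ^ 2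
      + ξ 4 * ‖v 3‖ ^ 2 + ξ 5) (by
      intro i
      fin_cases i <;>
        simp only [Fin.zero_eta, Fin.mk_one, Fin.reduceFinMk, inner_add_left, real_inner_smul_left,
          real_inner_self_eq_norm_sq]
      · rw [real_inner_comm (v 0) (v 1), real_inner_comm (v 0) (v 2), real_inner_comm (v 0) (v 3)]
        linear_combination r1 - ‖v 0‖ ^ 2 * r5
      · rw [real_inner_comm (v 1) (v 0), real_inner_comm (v 1) (v 2), real_inner_comm (v 1) (v 3)]
        linear_combination r2 - ‖v 1‖ ^ 2 * r5
      · rw [real_inner_comm (v 2) (v 0), real_inner_comm (v 2) (v 1), real_inner_comm (v 2) (v 3)]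
        linear_combination r3 - ‖v 2‖ ^ 2 * r5
      · rw [real_inner_comm (v 3) (v 0), real_inner_comm (v 3) (v 1), real_inner_comm (v 3) (v 2)]
        linear_combination r4 - ‖v 3‖ ^ 2 * r5)
  have hxk := congrArg (fun t => ⟪x, t⟫) hk
  simp only [inner_add_right, real_inner_smul_right, real_inner_self_eq_norm_sq,
    inner_zero_right] at hxk
  have hw : w * ξ 0 = 0 := by
    linear_combination (1/2) * hh - (1/2) * r0 - hxk + (1/2) * (‖x‖ ^ 2 + w) * r5
  rcases mul_eq_zero.1 hw with h | h
  · exact h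
  exfalso
  have hz := hv.eq_zero_of_sum_eq_zero (s := Finset.univ)
    (w := ![ξ 1, ξ 2, ξ 3, ξ 4])
    (by simp [Fin.sum_univ_succ]; linarith)
    (by
      rw [h] at hk
      simp [Fin.sum_univ_succ]
      rw [← hk]
      module)
  have h1 : ξ 1 = 0 := hz 0 (Finset.mem_univ _)
  have h2 : ξ 2 = 0 := hz 1 (Finset.mem_univ _)
  have h3 : ξ 3 = 0 := hz 2 (Finset.mem_univ _)
  have h4 : ξ 4 = 0 := hz 3 (Finset.mem_univ _)
  have h5 : ξ 5 = 0 := by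
    rw [h, h1, h2, h3, h4] at hh
    linarith
  apply hξ0
  funext i
  fin_cases i
  exacts [h, h1, h2, h3, h4, h5]

lemma quartic_null (a b c d e : ℝ) (h : a ≠ 0 ∨ c ≠ 0) :
    volume {s : ℝ | a * s ^ 4 + b * s ^ 3 + c * s ^ 2 + d * s + e = 0} = 0 := by
  let p : Polynomial ℝ := Polynomial.C a * Polynomial.X ^ 4 + Polynomial.C b * Polynomial.X ^ 3
    + Polynomial.C c * Polynomial.X ^ 2 + Polynomial.C d * Polynomial.X + Polynomial.C e
  have hp : p ≠ 0 := by
    intro hp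
    have h4 := congrArg (fun q => Polynomial.coeff q 4) hp
    have h2 := congrArg (fun q => Polynomial.coeff q 2) hp
    simp [p] at h4 h2
    tauto
  refine Set.Finite.measure_zero (((p.roots.toFinset).finite_toSet).subset ?_) _
  intro s hs
  simp only [Finset.mem_coe, Multiset.mem_toFinset]
  rw [Polynomial.mem_roots hp]
  simpa [p, Polynomial.IsRoot] using hs

lemma null_of_lines (S : Set E3) (hS : MeasurableSet S) (d : E3)
    (h : ∀ x, volume {s : ℝ | x + s • d ∈ S} = 0) : volume S = 0 := by
  let T : Set (ℝ × E3) := {p | p.2 + p.1 • d ∈ S}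
  have hT : MeasurableSet T := by
    have : Measurable (fun p : ℝ × E3 => p.2 + p.1 • d) := by fun_prop
    exact this hS
  have h1 : (volume : Measure ℝ).prod (volume : Measure E3) T = 0 := by
    rw [Measure.prod_apply_symm hT]
    simp only [T, Set.preimage_ofPred_eq, h, lintegral_zero]
  rw [Measure.prod_apply hT] at h1
  have h2 : ∀ s : ℝ, volume (Prod.mk s ⁻¹' T) = volume S := by
    intro s
    exact measure_preimage_add_right volume (s • d) S
  simp only [h2, lintegral_const] at h1
  simpa using h1

instance : BorelSpace (Matrix (Fin 3) (Fin 3) ℝ) :=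
  inferInstanceAs (BorelSpace (Fin 3 → Fin 3 → ℝ))

instance : SecondCountableTopology (Matrix (Fin 3) (Fin 3) ℝ) :=
  inferInstanceAs (SecondCountableTopology (Fin 3 → Fin 3 → ℝ))

lemma cont_act (v : E3) :
    Continuous fun R : Matrix (Fin 3) (Fin 3) ℝ => Matrix.toEuclideanLin R v := by
  have : Continuous fun R : Matrix (Fin 3) (Fin 3) ℝ =>
      WithLp.toLp 2 (R.mulVec (WithLp.ofLp v)) := by fun_prop
  exact this

lemma plane_form (W : AffineSubspace ℝ E3) (hW : IsPlane W) :
    ∃ (n : E3) (c : ℝ), ‖n‖ = 1 ∧ (∀ x, x ∈ W ↔ ⟪n, x⟫ = c) ∧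
      ∀ L, reflAff W L = L - (2 * (⟪n, L⟫ - c)) • n := by
  obtain ⟨⟨p, hp⟩, hd⟩ := hW
  have hfr : Module.finrank ℝ (W.direction)ᗮ = 1 := by
    have := W.direction.finrank_add_finrank_orthogonal
    simp at this
    omega
  obtain ⟨n, hn, hspan⟩ : ∃ n : E3, ‖n‖ = 1 ∧ (W.direction)ᗮ = Submodule.span ℝ {n} := by
    obtain ⟨⟨n0, hn0⟩, hne, hsp⟩ := finrank_eq_one_iff'.1 hfr
    have hne' : n0 ≠ 0 := fun h => hne (by simp [h])
    have hne2 : ‖n0‖ ≠ 0 := by simpa using hne'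
    refine ⟨‖n0‖⁻¹ • n0, by simp [norm_smul, hne2], ?_⟩
    apply le_antisymm
    · intro w hw
      obtain ⟨c, hc⟩ := hsp ⟨w, hw⟩
      have hc' : c • n0 = w := congrArg Subtype.val hc
      rw [Submodule.mem_span_singleton]
      exact ⟨c * ‖n0‖, by rw [← hc', smul_smul, mul_assoc, mul_inv_cancel₀ hne2, mul_one]⟩
    · rw [Submodule.span_singleton_le_iff_mem]
      exact Submodule.smul_mem _ _ hn0
  have hmem : ∀ x, x ∈ W ↔ ⟪n, x⟫ = ⟪n, p⟫ := by
    intro x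
    rw [← AffineSubspace.vsub_right_mem_direction_iff_mem hp x,
      ← Submodule.orthogonal_orthogonal W.direction, hspan, Submodule.mem_orthogonal_singleton_iff_inner_right,
      vsub_eq_sub, inner_sub_right, sub_eq_zero]
  refine ⟨n, ⟪n, p⟫, hn, hmem, fun L => ?_⟩
  have hne : Nonempty W := ⟨⟨p, hp⟩⟩
  unfold reflAff
  rw [dif_pos hne]
  set r := ⟪n, L⟫ - ⟪n, p⟫ with hr
  have hq : L - r • n ∈ W := by
    rw [hmem, inner_sub_right, real_inner_smul_right, real_inner_self_eq_norm_sq, hn, hr]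
    ring
  have hv : r • n ∈ (W.direction)ᗮ := by
    rw [hspan]
    exact Submodule.smul_mem _ _ (Submodule.mem_span_singleton_self n)
  have := EuclideanGeometry.reflection_orthogonal_vadd hq hv
  rw [vadd_eq_add, vadd_eq_add] at this
  have e : r • n + (L - r • n) = L := by abel
  rw [e] at this
  rw [this]
  module

lemma inner_act (R : Matrix (Fin 3) (Fin 3) ℝ) (a b : E3) :
    ⟪a, Matrix.toEuclideanLin R b⟫ = ⟪Matrix.toEuclideanLin R.transpose a, b⟫ := by
  have h := Matrix.toEuclideanLin_conjTranspose_eq_adjoint R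
  rw [Matrix.conjTranspose_eq_transpose_of_trivial] at h
  rw [h, LinearMap.adjoint_inner_left]

lemma act_mul (A B : Matrix (Fin 3) (Fin 3) ℝ) (v : E3) :
    Matrix.toEuclideanLin (A * B) v = Matrix.toEuclideanLin A (Matrix.toEuclideanLin B v) := by
  simp [Matrix.toLpLin_apply, Matrix.mulVec_mulVec]

lemma so_left (R : Matrix (Fin 3) (Fin 3) ℝ) (hR : R ∈ Matrix.specialOrthogonalGroup (Fin 3) ℝ)
    (v : E3) : Matrix.toEuclideanLin R.transpose (Matrix.toEuclideanLin R v) = v := by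
  rw [Matrix.mem_specialOrthogonalGroup_iff, Matrix.mem_orthogonalGroup_iff'] at hR
  rw [← act_mul, hR.1]
  simp [Matrix.toLpLin_apply]

lemma so_right (R : Matrix (Fin 3) (Fin 3) ℝ) (hR : R ∈ Matrix.specialOrthogonalGroup (Fin 3) ℝ)
    (v : E3) : Matrix.toEuclideanLin R (Matrix.toEuclideanLin R.transpose v) = v := by
  rw [Matrix.mem_specialOrthogonalGroup_iff, Matrix.mem_orthogonalGroup_iff] at hR
  rw [← act_mul, hR.1]
  simp [Matrix.toLpLin_apply]

lemma so_norm (R : Matrix (Fin 3) (Fin 3) ℝ) (hR : R ∈ Matrix.specialOrthogonalGroup (Fin 3) ℝ)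
    (v : E3) : ‖Matrix.toEuclideanLin R v‖ = ‖v‖ := by
  have : ‖Matrix.toEuclideanLin R v‖ ^ 2 = ‖v‖ ^ 2 := by
    rw [← real_inner_self_eq_norm_sq, inner_act, so_left R hR, real_inner_self_eq_norm_sq]
  exact (sq_eq_sq₀ (norm_nonneg _) (norm_nonneg _)).1 this

lemma so_norm_t (R : Matrix (Fin 3) (Fin 3) ℝ)
    (hR : R ∈ Matrix.specialOrthogonalGroup (Fin 3) ℝ)
    (v : E3) : ‖Matrix.toEuclideanLin R.transpose v‖ = ‖v‖ := by
  rw [← so_norm R hR, so_right R hR]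

lemma exists_half_turn (u : E3) (hu : u ≠ 0) :
    ∃ g ∈ Matrix.specialOrthogonalGroup (Fin 3) ℝ, ∀ y n : E3,
      ‖u‖ ^ 2 * ⟪n, Matrix.toEuclideanLin g y⟫ = 2 * ⟪n, u⟫ * ⟪u, y⟫ - ‖u‖ ^ 2 * ⟪n, y⟫ := by
  have hN : ‖u‖ ^ 2 = u 0 ^ 2 + u 1 ^ 2 + u 2 ^ 2 := by
    rw [EuclideanSpace.real_norm_sq_eq, Fin.sum_univ_three]
  have hne : u 0 ^ 2 + u 1 ^ 2 + u 2 ^ 2 ≠ 0 := by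
    rw [← hN]
    simpa using hu
  rw [hN]
  generalize h0 : u 0 = a at *
  generalize h1 : u 1 = b at *
  generalize h2 : u 2 = c at *
  let N := a ^ 2 + b ^ 2 + c ^ 2
  refine ⟨!![2 * a * a / N - 1, 2 * a * b / N, 2 * a * c / N;
    2 * b * a / N, 2 * b * b / N - 1, 2 * b * c / N;
    2 * c * a / N, 2 * c * b / N, 2 * c * c / N - 1], ?_, ?_⟩
  · rw [Matrix.mem_specialOrthogonalGroup_iff, Matrix.mem_orthogonalGroup_iff]
    constructor
    · ext i j
      fin_cases i <;> fin_cases j <;>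
        simp [Matrix.mul_apply, Fin.sum_univ_three, N] <;>
        field_simp <;> ring
    · rw [Matrix.det_fin_three]
      simp [N]
      field_simp
      ring
  · intro y n
    simp only [PiLp.inner_apply, Fin.sum_univ_three, Matrix.toLpLin_apply, Matrix.mulVec,
      dotProduct, N]
    simp [h0, h1, h2]
    field_simp
    ring

lemma exists_quad_ne (n x : E3) (hn : ‖n‖ = 1) (hx : x ≠ 0) (k : ℝ) :
    ∃ d : E3, 2 * ⟪n, d⟫ * ⟪d, x⟫ - ‖d‖ ^ 2 * ⟪n, x⟫ - k * ‖d‖ ^ 2 ≠ 0 := by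
  by_contra! h
  have e1 := h n
  rw [real_inner_self_eq_norm_sq, hn] at e1
  have e2 := h (EuclideanSpace.single 0 1)
  have e3 := h (EuclideanSpace.single 1 1)
  have e4 := h (EuclideanSpace.single 2 1)
  simp [EuclideanSpace.inner_single_left, EuclideanSpace.inner_single_right] at e2 e3 e4
  have e5 : ⟪n, x⟫ = n 0 * x 0 + n 1 * x 1 + n 2 * x 2 := by
    simp only [PiLp.inner_apply, Fin.sum_univ_three]
    simp
    ring
  have hk : k = 0 := by linarith
  have hnx : ⟪n, x⟫ = 0 := by linarith
  have e6 := h (n + x)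
  rw [hk, inner_add_right, inner_add_left, hnx, real_inner_self_eq_norm_sq,
    real_inner_self_eq_norm_sq, hn] at e6
  apply hx
  have : ‖x‖ ^ 2 = 0 := by linarith
  simpa using this

lemma haar_null (μ : Measure (Matrix (Fin 3) (Fin 3) ℝ)) [IsProbabilityMeasure μ]
    (hsupp : μ ((Matrix.specialOrthogonalGroup (Fin 3) ℝ : Set (Matrix (Fin 3) (Fin 3) ℝ))ᶜ) = 0)
    (hinv : ∀ g ∈ Matrix.specialOrthogonalGroup (Fin 3) ℝ,
      μ.map (fun R => g * R) = μ) (n P : E3) (hn : ‖n‖ = 1) (hP : P ≠ 0) (k : ℝ) :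
    μ {R | ⟪n, Matrix.toEuclideanLin R P⟫ = k} = 0 := by
  have hc := cont_act P
  let T : Set (E3 × Matrix (Fin 3) (Fin 3) ℝ) :=
    {p | 2 * ⟪n, p.1⟫ * ⟪p.1, Matrix.toEuclideanLin p.2 P⟫
      - ‖p.1‖ ^ 2 * ⟪n, Matrix.toEuclideanLin p.2 P⟫ - k * ‖p.1‖ ^ 2 = 0}
  have hT : MeasurableSet T := by
    apply IsClosed.measurableSet
    exact isClosed_eq (by fun_prop) continuous_const
  have hT0 : (volume : Measure E3).prod μ T = 0 := by
    rw [Measure.prod_apply_symm hT, lintegral_eq_zero_iff (measurable_measure_prodMk_right hT)]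
    have hae : ∀ᵐ R ∂μ, R ∈ Matrix.specialOrthogonalGroup (Fin 3) ℝ := hsupp
    filter_upwards [hae] with R hR
    have hx : Matrix.toEuclideanLin R P ≠ 0 := by
      rw [← norm_ne_zero_iff, so_norm R hR, norm_ne_zero_iff]
      exact hP
    obtain ⟨d, hd⟩ := exists_quad_ne n _ hn hx k
    refine null_of_lines _ (measurable_prodMk_right hT) d fun x => ?_
    set y := Matrix.toEuclideanLin R P
    have := quartic_null 0 0 _ (2 * ⟪n, x⟫ * ⟪d, y⟫ + 2 * ⟪n, d⟫ * ⟪x, y⟫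
      - 2 * ⟪x, d⟫ * ⟪n, y⟫ - k * (2 * ⟪x, d⟫))
      (2 * ⟪n, x⟫ * ⟪x, y⟫ - ‖x‖ ^ 2 * ⟪n, y⟫ - k * ‖x‖ ^ 2) (Or.inr hd)
    convert! this using 2
    ext s
    simp only [T, Set.mem_preimage, Set.mem_ofPred_eq]
    have hns : ‖x + s • d‖ ^ 2 = ‖x‖ ^ 2 + 2 * s * ⟪x, d⟫ + s ^ 2 * ‖d‖ ^ 2 := by
      rw [norm_add_sq_real, real_inner_smul_right, norm_smul, mul_pow, Real.norm_eq_abs, sq_abs]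
      ring
    change (2 * ⟪n, x + s • d⟫ * ⟪x + s • d, y⟫ - ‖x + s • d‖ ^ 2 * ⟪n, y⟫
      - k * ‖x + s • d‖ ^ 2 = 0) ↔ _
    rw [hns]
    simp only [inner_add_left, inner_add_right, real_inner_smul_left, real_inner_smul_right]
    constructor <;> intro h <;> linear_combination h
  rw [Measure.prod_apply hT, lintegral_eq_zero_iff (measurable_measure_prodMk_left hT)] at hT0
  have hne : ∀ᵐ u : E3, u ≠ 0 := by
    have : volume ({0} : Set E3) = 0 := measure_singleton 0
    simpa [ae_iff] using this
  obtain ⟨u, hu0, hu⟩ := (hT0.and hne).exists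
  obtain ⟨g, hg, hgu⟩ := exists_half_turn u hu
  rw [← hinv g hg, Measure.map_apply]
  · refine measure_mono_null ?_ hu0
    intro R hR
    simp only [Set.mem_preimage, Set.mem_ofPred_eq, act_mul] at hR
    change 2 * ⟪n, u⟫ * ⟪u, Matrix.toEuclideanLin R P⟫
      - ‖u‖ ^ 2 * ⟪n, Matrix.toEuclideanLin R P⟫ - k * ‖u‖ ^ 2 = 0
    rw [← hgu, hR]
    ring
  · exact Continuous.measurable (by fun_prop)
  · exact (isClosed_eq (by fun_prop) continuous_const).measurableSet

lemma line_null (Y : (Fin 4 → ℝ) →ₗ[ℝ] E3) (Z : (Fin 4 → ℝ) →ₗ[ℝ] ℝ) (α β γ : Fin 4 → ℝ)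
    (h : Y α ≠ 0 ∨ Z α - ‖Y β‖ ^ 2 - 2 * ⟪Y α, Y γ⟫ ≠ 0) :
    volume {s : ℝ | Z (s ^ 2 • α + s • β + γ) - ‖Y (s ^ 2 • α + s • β + γ)‖ ^ 2 = 0} = 0 := by
  have := quartic_null (-‖Y α‖ ^ 2) (-2 * ⟪Y α, Y β⟫) (Z α - ‖Y β‖ ^ 2 - 2 * ⟪Y α, Y γ⟫)
    (Z β - 2 * ⟪Y β, Y γ⟫) (Z γ - ‖Y γ‖ ^ 2) (by
      rcases h with h | h
      · left
        simpa using h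
      · exact Or.inr h)
  convert! this using 2
  ext s
  simp only [Set.mem_ofPred_eq, map_add, map_smul, smul_eq_mul]
  have : ‖s ^ 2 • Y α + s • Y β + Y γ‖ ^ 2 = s ^ 4 * ‖Y α‖ ^ 2 + 2 * s ^ 3 * ⟪Y α, Y β⟫
      + s ^ 2 * (‖Y β‖ ^ 2 + 2 * ⟪Y α, Y γ⟫) + 2 * s * ⟪Y β, Y γ⟫ + ‖Y γ‖ ^ 2 := by
    simp only [← real_inner_self_eq_norm_sq, inner_add_left, inner_add_right,
      real_inner_smul_left, real_inner_smul_right]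
    rw [real_inner_comm (Y α) (Y β), real_inner_comm (Y α) (Y γ), real_inner_comm (Y β) (Y γ)]
    ring
  rw [this]
  constructor <;> intro h <;> linear_combination h

/-- The vector of differences of squared distances. -/
def aVec (n : Fin 4 → E3) (c : Fin 4 → ℝ) (v : Fin 4 → E3) (L0 : E3)
    (R : Matrix (Fin 3) (Fin 3) ℝ) (t : E3) : Fin 4 → ℝ := fun i =>
  4 * (⟪n i, Matrix.toEuclideanLin R L0 + t⟫ - c i) ^ 2
    + 4 * (⟪n i, Matrix.toEuclideanLin R L0 + t⟫ - c i) * ⟪n i, Matrix.toEuclideanLin R (v i)⟫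

lemma aVec_cont (n : Fin 4 → E3) (c : Fin 4 → ℝ) (v : Fin 4 → E3) (L0 : E3) :
    Continuous fun p : E3 × Matrix (Fin 3) (Fin 3) ℝ => aVec n c v L0 p.2 p.1 := by
  have hc := cont_act L0
  have hv := fun i => cont_act (v i)
  unfold aVec
  fun_prop

lemma slice_null (n : Fin 4 → E3) (c : Fin 4 → ℝ) (v : Fin 4 → E3) (L0 : E3)
    (Y : (Fin 4 → ℝ) →ₗ[ℝ] E3) (Z : (Fin 4 → ℝ) →ₗ[ℝ] ℝ)
    (R : Matrix (Fin 3) (Fin 3) ℝ) (d : E3)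
    (hd : ∀ x, Y (fun i => 4 * ⟪n i, d⟫ ^ 2) ≠ 0 ∨
      Z (fun i => 4 * ⟪n i, d⟫ ^ 2) - ‖Y (fun i =>
        8 * (⟪n i, Matrix.toEuclideanLin R L0 + x⟫ - c i) * ⟪n i, d⟫
          + 4 * ⟪n i, d⟫ * ⟪n i, Matrix.toEuclideanLin R (v i)⟫)‖ ^ 2
          - 2 * ⟪Y (fun i => 4 * ⟪n i, d⟫ ^ 2), Y (aVec n c v L0 R x)⟫ ≠ 0) :
    volume {t : E3 | Z (aVec n c v L0 R t) - ‖Y (aVec n c v L0 R t)‖ ^ 2 = 0} = 0 := by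
  have hYc : Continuous Y := Y.continuous_of_finiteDimensional
  have hZc : Continuous Z := Z.continuous_of_finiteDimensional
  have hac : Continuous fun t => aVec n c v L0 R t := by
    unfold aVec
    fun_prop
  refine null_of_lines _ (IsClosed.measurableSet
    (isClosed_eq (by fun_prop) continuous_const)) d fun x => ?_
  have := line_null Y Z _ _ _ (hd x)
  convert! this using 2
  ext s
  simp only [Set.mem_ofPred_eq]
  have e : aVec n c v L0 R (x + s • d) = (s ^ 2 • (fun i => 4 * ⟪n i, d⟫ ^ 2) + s • (fun i =>
        8 * (⟪n i, Matrix.toEuclideanLin R L0 + x⟫ - c i) * ⟪n i, d⟫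
          + 4 * ⟪n i, d⟫ * ⟪n i, Matrix.toEuclideanLin R (v i)⟫) + aVec n c v L0 R x) := by
    funext i
    simp only [aVec, Pi.add_apply, Pi.smul_apply, smul_eq_mul, inner_add_right,
      real_inner_smul_right]
    ring
  rw [e]

lemma tuple_null (mini : Fin 4 → E3) (hm : AffineIndependent ℝ mini) (Lini : E3)
    (μ : Measure (Matrix (Fin 3) (Fin 3) ℝ)) [IsProbabilityMeasure μ]
    (hsupp : μ ((Matrix.specialOrthogonalGroup (Fin 3) ℝ : Set (Matrix (Fin 3) (Fin 3) ℝ))ᶜ) = 0)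
    (hinv : ∀ g ∈ Matrix.specialOrthogonalGroup (Fin 3) ℝ,
      μ.map (fun R => g * R) = μ)
    (n : Fin 4 → E3) (c : Fin 4 → ℝ) (hn : ∀ i, ‖n i‖ = 1)
    (hnc : (∃ d i j, ⟪n i, d⟫ ^ 2 ≠ ⟪n j, d⟫ ^ 2) ∨ ((∀ i, n i = n 0) ∧ ∃ i j, c i ≠ c j)) :
    ((volume : Measure E3).prod μ)
      {p : E3 × Matrix (Fin 3) (Fin 3) ℝ |
        p.2 ∈ Matrix.specialOrthogonalGroup (Fin 3) ℝ ∧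
          fM (fun i => Matrix.toEuclideanLin p.2 (mini i) + p.1)
            (fun i => ‖(Matrix.toEuclideanLin p.2 Lini + p.1)
              - (2 * (⟪n i, Matrix.toEuclideanLin p.2 Lini + p.1⟫ - c i)) • n i
              - (Matrix.toEuclideanLin p.2 (mini i) + p.1)‖ ^ 2) = 0} = 0 := by
  set v : Fin 4 → E3 := fun i => mini i - Lini with hvdef
  have hv : AffineIndependent ℝ v := by
    have : AffineIndependent ℝ ((-Lini) +ᵥ mini) := (affineIndependent_vadd ℝ).2 hm
    convert! this using 1
    funext i
    simp [hvdef, sub_eq_neg_add]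
  obtain ⟨Y, Z, hYZ⟩ := exists_YZ v hv
  let T : Set (E3 × Matrix (Fin 3) (Fin 3) ℝ) :=
    {p | Z (aVec n c v Lini p.2 p.1) - ‖Y (aVec n c v Lini p.2 p.1)‖ ^ 2 = 0}
  have hYc : Continuous Y := Y.continuous_of_finiteDimensional
  have hZc : Continuous Z := Z.continuous_of_finiteDimensional
  have hac := aVec_cont n c v Lini
  have hT : MeasurableSet T :=
    (isClosed_eq (by fun_prop) continuous_const).measurableSet
  have hT0 : (volume : Measure E3).prod μ T = 0 := by
    rw [Measure.prod_apply_symm hT, lintegral_eq_zero_iff (measurable_measure_prodMk_right hT)]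
    have hae : ∀ᵐ R ∂μ, R ∈ Matrix.specialOrthogonalGroup (Fin 3) ℝ := hsupp
    rcases hnc with ⟨d, i, j, hd⟩ | ⟨hn0, i, j, hc⟩
    · refine Filter.Eventually.of_forall fun R => ?_
      refine slice_null n c v Lini Y Z R d fun x => Or.inl fun h => hd ?_
      have hi := hYZ (fun i => 4 * ⟪n i, d⟫ ^ 2) i
      have hj := hYZ (fun i => 4 * ⟪n i, d⟫ ^ 2) j
      rw [h, inner_zero_left] at hi hj
      linarith
    · have hP : Y c ≠ 0 := by
        intro h
        have hi := hYZ c i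
        have hj := hYZ c j
        rw [h, inner_zero_left] at hi hj
        exact hc (by linarith)
      have hnull := haar_null μ hsupp hinv (n 0) (Y c) (hn 0) hP (-2 * ‖Y c‖ ^ 2)
      have hae2 : ∀ᵐ R ∂μ, ¬ ⟪n 0, Matrix.toEuclideanLin R (Y c)⟫ = -2 * ‖Y c‖ ^ 2 := by
        rw [ae_iff]
        simpa using hnull
      filter_upwards [hae, hae2] with R hR hR2
      refine slice_null n c v Lini Y Z R (n 0) fun x => Or.inr ?_
      set q := Matrix.toEuclideanLin R.transpose (n 0) with hq
      have hq1 : ‖q‖ = 1 := by rw [hq, so_norm_t R hR, hn]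
      have hqi : ⟪n 0, Matrix.toEuclideanLin R (Y c)⟫ = ⟪q, Y c⟫ := inner_act _ _ _
      have uniq : ∀ a y z, (∀ i, -2 * ⟪y, v i⟫ + z = a i) → Y a = y ∧ Z a = z := by
        intro a y z h
        obtain ⟨h1, h2⟩ := aff_inj v hv (Y a - y) (Z a - z) (by
          intro i
          rw [inner_sub_left]
          linarith [hYZ a i, h i])
        exact ⟨sub_eq_zero.1 h1, sub_eq_zero.1 h2⟩
      have hnn : ∀ i, ⟪n i, n 0⟫ = 1 := by
        intro i
        rw [hn0 i, real_inner_self_eq_norm_sq, hn]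
        norm_num
      obtain ⟨a1, a2⟩ := uniq (fun i => 4 * ⟪n i, n 0⟫ ^ 2) 0 4 (by
        intro i
        simp [hnn])
      obtain ⟨b1, -⟩ := uniq (fun i =>
        8 * (⟪n i, Matrix.toEuclideanLin R Lini + x⟫ - c i) * ⟪n i, n 0⟫
          + 4 * ⟪n i, n 0⟫ * ⟪n i, Matrix.toEuclideanLin R (v i)⟫)
        (-(8 : ℝ) • Y c - (2 : ℝ) • q)
        (8 * ⟪n 0, Matrix.toEuclideanLin R Lini + x⟫ - 8 * Z c) (by
        intro i
        have := hYZ c i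
        rw [hnn, hn0 i, inner_act R (n 0) (v i), ← hq, inner_sub_left, real_inner_smul_left,
          real_inner_smul_left]
        linear_combination (-8) * this)
      rw [a1, a2, b1, inner_zero_left]
      intro h
      apply hR2
      rw [hqi]
      have e : ‖-(8 : ℝ) • Y c - (2 : ℝ) • q‖ ^ 2
          = 64 * ‖Y c‖ ^ 2 + 32 * ⟪q, Y c⟫ + 4 * ‖q‖ ^ 2 := by
        simp only [← real_inner_self_eq_norm_sq, inner_sub_left, inner_sub_right,
          real_inner_smul_left, real_inner_smul_right]
        rw [real_inner_comm q (Y c)]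
        ring
      rw [e, hq1] at h
      linarith
  refine measure_mono_null ?_ hT0
  rintro ⟨t, R⟩ ⟨hR, hf⟩
  simp only at hR hf
  change Z (aVec n c v Lini R t) - ‖Y (aVec n c v Lini R t)‖ ^ 2 = 0
  refine cm_zero v hv _ ?_ (Y (aVec n c v Lini R t)) _ _ ?_ hf
  · intro i j
    rw [← so_norm R hR (v i - v j)]
    congr 1
    simp only [hvdef, map_sub]
    abel
  · intro i
    have h := hYZ (aVec n c v Lini R t) i
    have e1 : (Matrix.toEuclideanLin R Lini + t)
              - (2 * (⟪n i, Matrix.toEuclideanLin R Lini + t⟫ - c i)) • n i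
              - (Matrix.toEuclideanLin R (mini i) + t)
        = -(Matrix.toEuclideanLin R (v i)
          + (2 * (⟪n i, Matrix.toEuclideanLin R Lini + t⟫ - c i)) • n i) := by
      simp only [hvdef, map_sub]
      abel
    rw [e1, norm_neg, norm_add_sq_real, norm_sub_sq_real, so_norm R hR, real_inner_smul_right,
      norm_smul, hn, real_inner_comm (n i), mul_one, Real.norm_eq_abs, sq_abs]
    have ha : aVec n c v Lini R t i = 4 * (⟪n i, Matrix.toEuclideanLin R Lini + t⟫ - c i) ^ 2
      + 4 * (⟪n i, Matrix.toEuclideanLin R Lini + t⟫ - c i)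
        * ⟪n i, Matrix.toEuclideanLin R (v i)⟫ := rfl
    rw [ha] at h
    linear_combination -h

/-- A tuple of planes, not all equal, has suitable normal forms. -/
lemma tuple_form (W : Fin 4 → AffineSubspace ℝ E3) (hW : ∀ i, IsPlane (W i))
    (hne : ¬ ∀ i j, W i = W j) :
    ∃ (n : Fin 4 → E3) (c : Fin 4 → ℝ), (∀ i, ‖n i‖ = 1) ∧
      (∀ i L, reflAff (W i) L = L - (2 * (⟪n i, L⟫ - c i)) • n i) ∧
      ((∃ d i j, ⟪n i, d⟫ ^ 2 ≠ ⟪n j, d⟫ ^ 2) ∨ ((∀ i, n i = n 0) ∧ ∃ i j, c i ≠ c j)) := by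
  choose n c hn hmem hrefl using fun i => plane_form (W i) (hW i)
  by_cases h : ∃ d i j, ⟪n i, d⟫ ^ 2 ≠ ⟪n j, d⟫ ^ 2
  · exact ⟨n, c, hn, hrefl, Or.inl h⟩
  push Not at h
  have key : ∀ i, ∃ c' : ℝ, (∀ x, x ∈ W i ↔ ⟪n 0, x⟫ = c') ∧
      ∀ L, reflAff (W i) L = L - (2 * (⟪n 0, L⟫ - c')) • n 0 := by
    intro i
    have h1 := h (n 0) i 0
    rw [real_inner_self_eq_norm_sq, hn] at h1
    have h2 : (⟪n i, n 0⟫ - 1) * (⟪n i, n 0⟫ + 1) = 0 := by linear_combination h1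
    rcases mul_eq_zero.1 h2 with h3 | h3
    · have : n i = n 0 := by
        have h4 : ‖n i - n 0‖ ^ 2 = 0 := by
          rw [norm_sub_sq_real, hn, hn]
          linarith
        rw [← sub_eq_zero]
        simpa using h4
      exact ⟨c i, by simpa [this] using hmem i, by simpa [this] using hrefl i⟩
    · have : n i = - n 0 := by
        have h4 : ‖n i + n 0‖ ^ 2 = 0 := by
          rw [norm_add_sq_real, hn, hn]
          linarith
        rw [← sub_eq_zero, sub_neg_eq_add]
        simpa using h4
      refine ⟨- c i, fun x => ?_, fun L => ?_⟩
      · rw [hmem i, this, inner_neg_left, neg_eq_iff_eq_neg]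
      · rw [hrefl i, this, inner_neg_left]
        module
  choose c' hc1 hc2 using key
  refine ⟨fun _ => n 0, c', fun _ => hn 0, hc2, Or.inr ⟨fun _ => rfl, ?_⟩⟩
  by_contra! hcc
  apply hne
  intro i j
  ext x
  rw [hc1 i, hc1 j, hcc i j]

/-- Theorem 3.1 (loudspeaker carried by the drone): for a finite set of walls,
non-coplanar initial microphone positions and an initial loudspeaker position on the
drone, the set of drone placements `(t, R) ∈ ℝ³ × SO(3)` for which the echo sorting
criterion vanishes for some walls that are not all equal has measure zero with respect
to the product of the Lebesgue measure on ℝ³ and the Haar probability measure on SO(3)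
(encoded as a left-invariant probability measure concentrated on SO(3) inside the space
of 3×3 matrices). -/
theorem bad_drone_placements_measure_zero_moving_source
    (𝒲 : Set (AffineSubspace ℝ E3)) (hfin : 𝒲.Finite) (hplane : ∀ W ∈ 𝒲, IsPlane W)
    (mini : Fin 4 → E3) (hm : AffineIndependent ℝ mini) (Lini : E3)
    (μ : Measure (Matrix (Fin 3) (Fin 3) ℝ)) [IsProbabilityMeasure μ]
    (hsupp : μ ((Matrix.specialOrthogonalGroup (Fin 3) ℝ : Set (Matrix (Fin 3) (Fin 3) ℝ))ᶜ) = 0)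
    (hinv : ∀ g ∈ Matrix.specialOrthogonalGroup (Fin 3) ℝ,
      μ.map (fun R => g * R) = μ) :
    ((volume : Measure E3).prod μ)
      {p : E3 × Matrix (Fin 3) (Fin 3) ℝ |
        p.2 ∈ Matrix.specialOrthogonalGroup (Fin 3) ℝ ∧
        ∃ W : Fin 4 → AffineSubspace ℝ E3, (∀ i, W i ∈ 𝒲) ∧ (¬ ∀ i j, W i = W j) ∧
          fM (fun i => Matrix.toEuclideanLin p.2 (mini i) + p.1)
            (fun i => ‖reflAff (W i) (Matrix.toEuclideanLin p.2 Lini + p.1)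
              - (Matrix.toEuclideanLin p.2 (mini i) + p.1)‖ ^ 2) = 0} = 0 := by
  have hfin' : {W : Fin 4 → AffineSubspace ℝ E3 | ∀ i, W i ∈ 𝒲}.Finite := by
    have := Set.Finite.pi (fun _ : Fin 4 => hfin)
    refine this.subset ?_
    intro W hW i _
    exact hW i
  have hfin2 : {W : Fin 4 → AffineSubspace ℝ E3 | (∀ i, W i ∈ 𝒲) ∧ ¬ ∀ i j, W i = W j}.Finite :=
    hfin'.subset fun W hW => hW.1
  refine measure_mono_null ?_ ((measure_biUnion_null_iff (s := fun W => {p : E3 × Matrix (Fin 3) (Fin 3) ℝ |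
        p.2 ∈ Matrix.specialOrthogonalGroup (Fin 3) ℝ ∧
          fM (fun i => Matrix.toEuclideanLin p.2 (mini i) + p.1)
            (fun i => ‖reflAff (W i) (Matrix.toEuclideanLin p.2 Lini + p.1)
              - (Matrix.toEuclideanLin p.2 (mini i) + p.1)‖ ^ 2) = 0})
    hfin2.countable).2 ?_)
  · rintro p ⟨hp, W, h1, h2, h3⟩
    exact Set.mem_biUnion (show W ∈ {W : Fin 4 → AffineSubspace ℝ E3 |
      (∀ i, W i ∈ 𝒲) ∧ ¬ ∀ i j, W i = W j} from ⟨h1, h2⟩) ⟨hp, h3⟩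
  · rintro W ⟨h1, h2⟩
    obtain ⟨n, c, hn, hr, hnc⟩ := tuple_form W (fun i => hplane _ (h1 i)) h2
    have := tuple_null mini hm Lini μ hsupp hinv n c hn hnc
    simp only [hr]
    exact this

end
end

section
/- Let m₁, m₂, m₃, m₄ ∈ ℝ³ be fixed non-coplanar points. Then the set of tuples (s₁, s₂, s₃, s₄) ∈ (ℝ³)⁴ such that the s_i are not all equal and f_M(‖s₁ − m₁‖², ‖s₂ − m₂‖², ‖s₃ − m₃‖², ‖s₄ − m₄‖²) = 0 has Lebesgue measure zero in (ℝ³)⁴ ≅ ℝ¹². -/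
open MeasureTheory
open scoped RealInnerProductSpace

noncomputable section

def pp (x y z p q r a b c t : ℝ) : ℝ :=
  Matrix.det !![0, t, a, b, c, 1;
                t, 0, p, q, r, 1;
                a, p, 0, x, y, 1;
                b, q, x, 0, z, 1;
                c, r, y, z, 0, 1;
                1, 1, 1, 1, 1, 0]

set_option maxHeartbeats 4000000 in
lemma pp_quad (x y z p q r a b c t : ℝ) :
    pp x y z p q r a b c t = -(x^2+y^2+z^2-2*x*y-2*y*z-2*x*z) * t^2
      + (pp x y z p q r a b c 1 - pp x y z p q r a b c (-1)) / 2 * t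
      + pp x y z p q r a b c 0 := by
  simp [pp, Matrix.det_succ_row_zero, Fin.sum_univ_succ, Fin.succAbove, Matrix.submatrix]
  ring

lemma fM_eq_pp (m : Fin 4 → E3) (u : Fin 4 → ℝ) :
    fM m u = pp (‖m 1 - m 2‖^2) (‖m 1 - m 3‖^2) (‖m 2 - m 3‖^2) (‖m 0 - m 1‖^2)
      (‖m 0 - m 2‖^2) (‖m 0 - m 3‖^2) (u 1) (u 2) (u 3) (u 0) := by
  simp only [fM, pp, sub_self, norm_zero, norm_sub_rev (m 1) (m 0), norm_sub_rev (m 2) (m 0),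
    norm_sub_rev (m 3) (m 0), norm_sub_rev (m 2) (m 1), norm_sub_rev (m 3) (m 1),
    norm_sub_rev (m 3) (m 2)]
  norm_num

lemma coeff_ne (m : Fin 4 → E3) (hm : AffineIndependent ℝ m) (x y z : ℝ)
    (hx : x = ‖m 1 - m 2‖^2) (hy : y = ‖m 1 - m 3‖^2) (hz : z = ‖m 2 - m 3‖^2) :
    -(x^2+y^2+z^2-2*x*y-2*y*z-2*x*z) ≠ 0 := by
  intro h
  have hli := (affineIndependent_iff_linearIndependent_vsub ℝ m 1).1 hm
  have h2 : LinearIndependent ℝ ![m 2 - m 1, m 3 - m 1] := by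
    have := hli.comp (![⟨2, by decide⟩, ⟨3, by decide⟩] : Fin 2 → {x : Fin 4 // x ≠ 1}) (by
      intro i j; fin_cases i <;> fin_cases j <;> simp)
    have e : ![m 2 - m 1, m 3 - m 1] = (fun i : {x : Fin 4 // x ≠ 1} => m i -ᵥ m 1) ∘
        (![⟨2, by decide⟩, ⟨3, by decide⟩] : Fin 2 → {x : Fin 4 // x ≠ 1}) := by
      funext i; fin_cases i <;> rfl
    rw [e]; exact this
  have hz' : z = y - 2 * inner ℝ (m 2 - m 1) (m 3 - m 1) + x := by
    have := norm_sub_sq_real (m 2 - m 1) (m 3 - m 1)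
    rw [sub_sub_sub_cancel_right] at this
    rw [hx, hy, hz, this, norm_sub_rev (m 1), norm_sub_rev (m 1)]; ring
  rw [norm_sub_rev] at hx hy
  set v := m 2 - m 1
  set w := m 3 - m 1
  have hv : v ≠ 0 := h2.ne_zero 0
  have key : inner ℝ v w ^ 2 = x * y := by rw [hz'] at h; linarith
  have hn : ‖inner ℝ v w‖ = ‖v‖ * ‖w‖ := by
    rw [← abs_of_nonneg (by positivity : 0 ≤ ‖v‖ * ‖w‖), Real.norm_eq_abs, ← sq_eq_sq_iff_abs_eq_abs]
    rw [key, hx, hy]; ring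
  have h3 := LinearIndependent.pair_iff.1 h2
  have e : x • w = inner ℝ v w • v := by
    rw [← sub_eq_zero, ← inner_self_eq_zero (𝕜 := ℝ)]
    simp only [inner_sub_left, inner_sub_right, real_inner_smul_left, real_inner_smul_right]
    rw [real_inner_self_eq_norm_sq v, real_inner_self_eq_norm_sq w, real_inner_comm v w, ← hx, ← hy]
    linear_combination (-x) * key
  have := (h3 (inner ℝ v w) (-x) (by rw [← e]; simp)).2
  have : ‖v‖^2 = 0 := by linarith
  exact hv (by simpa using this)

lemma quad_finite (a b c : ℝ) (ha : a ≠ 0) : {t : ℝ | a * t^2 + b * t + c = 0}.Finite := by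
  open Polynomial in
  have hp : (C a * X^2 + C b * X + C c : ℝ[X]) ≠ 0 := by
    intro h
    have := congrArg natDegree h
    rw [natDegree_quadratic ha] at this
    simp at this
  refine (Polynomial.finite_setOfPred_isRoot hp).subset ?_
  intro t ht
  simpa [Polynomial.IsRoot] using ht

lemma slice_null_s19 (a b c : ℝ) (ha : a ≠ 0) (m : E3) :
    volume {s : E3 | a * (‖s - m‖^2)^2 + b * ‖s - m‖^2 + c = 0} = 0 := by
  have hf := quad_finite a b c ha
  refine measure_mono_null (t := ⋃ t ∈ {t : ℝ | a * t^2 + b * t + c = 0},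
    Metric.sphere m (Real.sqrt t)) ?_ ?_
  · intro s hs
    simp only [Set.mem_iUnion]
    refine ⟨‖s - m‖^2, hs, ?_⟩
    rw [Real.sqrt_sq (norm_nonneg _)]
    simp [dist_eq_norm]
  · rw [measure_biUnion_null_iff hf.countable]
    intro t _
    exact Measure.addHaar_sphere _ _ _

/-- For fixed non-coplanar microphones, the set of tuples of mirror points
`(s₁,…,s₄) ∈ (ℝ³)⁴ ≅ ℝ¹²` that are not all equal and satisfy the echo sorting
criterion `f_M(‖sᵢ - mᵢ‖²) = 0` has Lebesgue measure zero. -/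
theorem bad_mirror_point_tuples_measure_zero (m : Fin 4 → E3)
    (hm : AffineIndependent ℝ m) :
    volume {s : Fin 4 → E3 |
      (¬ ∀ i j, s i = s j) ∧ fM m (fun i => ‖s i - m i‖ ^ 2) = 0} = 0 := by
  refine measure_mono_null (t := {s : Fin 4 → E3 | fM m (fun i => ‖s i - m i‖ ^ 2) = 0})
    (fun s hs => hs.2) ?_
  have hc : Continuous (fun s : Fin 4 → E3 => fM m (fun i => ‖s i - m i‖ ^ 2)) := by
    unfold fM
    refine Continuous.matrix_det ?_
    refine continuous_matrix ?_
    intro i j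
    fin_cases i <;> fin_cases j <;> simp <;> fun_prop
  have hmeas : MeasurableSet {s : Fin 4 → E3 | fM m (fun i => ‖s i - m i‖ ^ 2) = 0} :=
    (isClosed_singleton.preimage hc).measurableSet
  have hmp := (volume_preserving_piFinSuccAbove (fun _ : Fin 4 => E3) 0).symm
  rw [← hmp.measure_preimage hmeas.nullMeasurableSet]
  have hmeas2 := hmp.measurable hmeas
  rw [Measure.volume_eq_prod, Measure.prod_apply_symm hmeas2]
  refine (lintegral_congr fun y => ?_).trans lintegral_zero
  refine measure_mono_null ?_ (slice_null_s19 _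
    ((pp (‖m 1 - m 2‖^2) (‖m 1 - m 3‖^2) (‖m 2 - m 3‖^2) (‖m 0 - m 1‖^2)
      (‖m 0 - m 2‖^2) (‖m 0 - m 3‖^2) (‖y 0 - m 1‖^2) (‖y 1 - m 2‖^2) (‖y 2 - m 3‖^2) 1
      - pp (‖m 1 - m 2‖^2) (‖m 1 - m 3‖^2) (‖m 2 - m 3‖^2) (‖m 0 - m 1‖^2)
      (‖m 0 - m 2‖^2) (‖m 0 - m 3‖^2) (‖y 0 - m 1‖^2) (‖y 1 - m 2‖^2) (‖y 2 - m 3‖^2) (-1)) / 2)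
    (pp (‖m 1 - m 2‖^2) (‖m 1 - m 3‖^2) (‖m 2 - m 3‖^2) (‖m 0 - m 1‖^2)
      (‖m 0 - m 2‖^2) (‖m 0 - m 3‖^2) (‖y 0 - m 1‖^2) (‖y 1 - m 2‖^2) (‖y 2 - m 3‖^2) 0)
    (coeff_ne m hm _ _ _ rfl rfl rfl) (m 0))
  intro x hx
  change fM m (fun i => ‖(Fin.insertNth 0 x y : Fin 4 → E3) i - m i‖ ^ 2) = 0 at hx
  rw [fM_eq_pp, pp_quad] at hx
  exact hx

end
end
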